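/- Let E be a Polish space, and endow the space 𝒫(E) of Borel probability measures on E with the topology of weak convergence (equivalently the Lévy–Prokhorov metric) and the associated Borel σ-algebra. Then there exists a measurable map Φ : 𝒫(E) × 𝒫(E) → 𝒫(E × E) such that for every pair (μ, ν): the first marginal of Φ(μ, ν) is μ, the second marginal is ν, and Φ(μ, ν)({(x, y) ∈ E × E : x ≠ y}) = ‖μ − ν‖_var. In other words, a maximal coupling can be chosen measurably in the pair of measures. -/

import Mathlib

open MeasureTheory

/-- Total variation distance between two measures:
`sup { |μ(Γ) − ν(Γ)| : Γ measurable }`. -/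
noncomputable def tvDist {E : Type*} [MeasurableSpace E] (μ ν : Measure E) : ℝ :=
  sSup {r : ℝ | ∃ Γ : Set E, MeasurableSet Γ ∧ r = |(μ Γ).toReal - (ν Γ).toReal|}

/-!
Write the probability measures `μ` and `ν` as `m + a` and `m + b` with `a` and `b` mutually
singular. These have the same mass `c`, the total variation distance of `μ` and `ν`. Putting `m` on
the diagonal and adding `c⁻¹ • a.prod b`, which does not charge the diagonal, gives a maximal
coupling. The densities of `μ` and `ν` with respect to `μ + ν` can be chosen jointly measurably in
the point and in the pair `(μ, ν)`, so that `m`, `a`, `b` and the coupling are kernels in `(μ, ν)`.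
Measurability for the Giry σ-algebra is the same as Borel measurability for the weak topology,
because that topology has a countable subbasis of sets `{μ | q < μ U}` with `U` open.
-/

open ProbabilityTheory Filter Topology Set TopologicalSpace
open scoped ENNReal

section Coupling

variable {E : Type*} [MeasurableSpace E]

/-- A coupling of `μ` and `ν` (a measure on the product with these marginals) whose mass off the
diagonal equals the total variation distance, the least possible value for probability measures. -/
structure IsMaximalCoupling (π : Measure (E × E)) (μ ν : Measure E) : Prop where
  map_fst : π.map Prod.fst = μ
  map_snd : π.map Prod.snd = ν
  toReal_compl_diagonal : (π (diagonal E)ᶜ).toReal = tvDist μ ν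

/-- The coupling of `m + a` and `m + b` that moves no mass of the common part `m` and couples the
residual parts `a` and `b`, meant to have the same finite mass, independently. If that mass is `0`
then `(a univ)⁻¹ = ∞` multiplies the zero measure. -/
noncomputable def diagonalCoupling (m a b : Measure E) : Measure (E × E) :=
  m.map (fun x ↦ (x, x)) + (a univ)⁻¹ • a.prod b

lemma inv_measure_univ_smul_measure_univ_smul (μ : Measure E) [IsFiniteMeasure μ] :
    (μ univ)⁻¹ • μ univ • μ = μ := by
  rcases eq_zero_or_neZero μ with rfl | _
  · simp
  · rw [smul_smul, ENNReal.inv_mul_cancel (NeZero.ne _) (measure_ne_top _ _), one_smul]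

lemma map_fst_diagonalCoupling (m a b : Measure E) [IsFiniteMeasure a] [SFinite b]
    (hab : a univ = b univ) : (diagonalCoupling m a b).map Prod.fst = m + a := by
  rw [diagonalCoupling, Measure.map_add _ _ measurable_fst,
    Measure.map_map measurable_fst (by fun_prop), Measure.map_smul, Measure.map_fst_prod, ← hab,
    inv_measure_univ_smul_measure_univ_smul]
  exact congrArg (· + a) Measure.map_id

lemma map_snd_diagonalCoupling (m a b : Measure E) [SFinite a] [IsFiniteMeasure b]
    (hab : a univ = b univ) : (diagonalCoupling m a b).map Prod.snd = m + b := by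
  rw [diagonalCoupling, Measure.map_add _ _ measurable_snd,
    Measure.map_map measurable_snd (by fun_prop), Measure.map_smul, Measure.map_snd_prod, hab,
    inv_measure_univ_smul_measure_univ_smul]
  exact congrArg (· + b) Measure.map_id

lemma prod_diagonal_eq_zero_of_mutuallySingular {a b : Measure E} [SFinite b] (h : a ⟂ₘ b) :
    a.prod b (diagonal E) = 0 := by
  have hcover : diagonal E ⊆ h.nullSet ×ˢ univ ∪ univ ×ˢ h.nullSetᶜ := by
    rintro ⟨x, _⟩ (rfl : x = _)
    by_cases hx : x ∈ h.nullSet <;> simp [hx]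
  refine measure_mono_null hcover (measure_union_null ?_ ?_) <;> simp [Measure.prod_prod]

lemma diagonalCoupling_compl_diagonal [MeasurableEq E] (m : Measure E) {a b : Measure E}
    [IsFiniteMeasure a] [SFinite b] (hab : a univ = b univ) (h : a ⟂ₘ b) :
    diagonalCoupling m a b (diagonal E)ᶜ = a univ := by
  have hcommon : m.map (fun x ↦ (x, x)) (diagonal E)ᶜ = 0 := by
    rw [Measure.map_apply (by fun_prop) measurableSet_diagonal.compl]
    exact measure_mono_null (fun _ hx ↦ hx rfl) measure_empty
  have hresidual : a.prod b (diagonal E)ᶜ = a univ * a univ := by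
    have hdiag := prod_diagonal_eq_zero_of_mutuallySingular h
    rw [measure_of_measure_compl_eq_zero (by rwa [compl_compl]), ← univ_prod_univ,
      Measure.prod_prod, ← hab]
  calc diagonalCoupling m a b (diagonal E)ᶜ
      = (a univ)⁻¹ * (a univ * a univ) := by
        rw [diagonalCoupling, Measure.add_apply, hcommon, zero_add, Measure.smul_apply,
          hresidual, smul_eq_mul]
    _ = a univ := congrArg (· univ) (inv_measure_univ_smul_measure_univ_smul a)

lemma tvDist_add_of_mutuallySingular (m : Measure E) {a b : Measure E} [IsFiniteMeasure m]
    [IsFiniteMeasure a] [IsFiniteMeasure b] (hab : a univ = b univ) (h : a ⟂ₘ b) :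
    tvDist (m + a) (m + b) = (a univ).toReal := by
  have hcancel (Γ : Set E) :
      ((m + a) Γ).toReal - ((m + b) Γ).toReal = a.real Γ - b.real Γ := by
    rw [← Measure.real_def, ← Measure.real_def, measureReal_add_apply, measureReal_add_apply,
      add_sub_add_left_eq_sub]
  refine IsGreatest.csSup_eq ⟨⟨h.nullSetᶜ, h.measurableSet_nullSet.compl, ?_⟩, ?_⟩
  · have ha : a h.nullSetᶜ = a univ :=
      measure_of_measure_compl_eq_zero (by rw [compl_compl, h.measure_nullSet])
    rw [hcancel, Measure.real_def, Measure.real_def, ha, h.measure_compl_nullSet,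
      ENNReal.toReal_zero, sub_zero, abs_of_nonneg ENNReal.toReal_nonneg]
  · rintro _ ⟨Γ, -, rfl⟩
    have ha : a.real Γ ≤ a.real univ := measureReal_mono (subset_univ Γ)
    have hb : b.real Γ ≤ a.real univ := by
      simpa only [Measure.real_def, hab] using measureReal_mono (μ := b) (subset_univ Γ)
    rw [hcancel]
    exact abs_sub_le_of_nonneg_of_le measureReal_nonneg ha measureReal_nonneg hb

lemma isMaximalCoupling_diagonalCoupling [MeasurableEq E] (m : Measure E) {a b : Measure E}
    [IsFiniteMeasure m] [IsFiniteMeasure a] [IsFiniteMeasure b] (hab : a univ = b univ)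
    (h : a ⟂ₘ b) : IsMaximalCoupling (diagonalCoupling m a b) (m + a) (m + b) where
  map_fst := map_fst_diagonalCoupling m a b hab
  map_snd := map_snd_diagonalCoupling m a b hab
  toReal_compl_diagonal := by
    rw [diagonalCoupling_compl_diagonal m hab h, tvDist_add_of_mutuallySingular m hab h]

lemma mutuallySingular_withDensity_tsub (μ : Measure E) {f g : E → ℝ≥0∞} (hf : Measurable f)
    (hg : Measurable g) :
    μ.withDensity (f - g) ⟂ₘ μ.withDensity (g - f) := by
  refine ⟨{x | f x ≤ g x}, measurableSet_le hf hg, ?_, ?_⟩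
  · rw [withDensity_apply_eq_zero (hf.sub hg)]
    refine measure_mono_null (fun x hx ↦ ?_) measure_empty
    exact hx.1 (tsub_eq_zero_of_le hx.2)
  · rw [withDensity_apply_eq_zero (hg.sub hf)]
    refine measure_mono_null (fun x hx ↦ ?_) measure_empty
    exact hx.1 (tsub_eq_zero_of_le (le_of_not_ge fun hle ↦ hx.2 hle))

end Coupling

section Kernel

variable {A E : Type*} [MeasurableSpace A] [MeasurableSpace E]

lemma exists_kernel_eq_add_mutuallySingular
    [MeasurableSpace.CountableOrCountablyGenerated A E] (κ η : Kernel A E)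
    [IsFiniteKernel κ] [IsFiniteKernel η] :
    ∃ m a b : Kernel A E, κ = m + a ∧ η = m + b ∧ ∀ x, a x ⟂ₘ b x := by
  let f := κ.rnDeriv (κ + η)
  let g := η.rnDeriv (κ + η)
  have hf : Measurable (Function.uncurry f) := κ.measurable_rnDeriv (κ + η)
  have hg : Measurable (Function.uncurry g) := η.measurable_rnDeriv (κ + η)
  have hκ : (κ + η).withDensity f = κ := by
    ext1 x
    exact Kernel.withDensity_rnDeriv_eq
      (Measure.absolutelyContinuous_of_le (Measure.le_add_right le_rfl))
  have hη : (κ + η).withDensity g = η := by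
    ext1 x
    exact Kernel.withDensity_rnDeriv_eq
      (Measure.absolutelyContinuous_of_le (Measure.le_add_left le_rfl))
  refine ⟨(κ + η).withDensity (f ⊓ g), (κ + η).withDensity (f - g),
    (κ + η).withDensity (g - f), ?_, ?_, fun x ↦ ?_⟩
  · have hsplit : f ⊓ g + (f - g) = f := by
      ext x y
      exact (add_comm _ _).trans tsub_add_min
    rw [← Kernel.withDensity_add_right (hf.min hg) (hf.sub hg), hsplit, hκ]
  · have hsplit : f ⊓ g + (g - f) = g := by
      ext x y
      rw [inf_comm]
      exact (add_comm _ _).trans tsub_add_min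
    rw [← Kernel.withDensity_add_right (hf.min hg) (hg.sub hf), hsplit, hη]
  · rw [Kernel.withDensity_apply _ (hf.sub hg), Kernel.withDensity_apply _ (hg.sub hf)]
    exact mutuallySingular_withDensity_tsub _ hf.of_uncurry_left hg.of_uncurry_left

lemma measurable_diagonalCoupling (m a b : Kernel A E) [IsSFiniteKernel a] [IsSFiniteKernel b] :
    Measurable fun x ↦ diagonalCoupling (m x) (a x) (b x) := by
  refine Measure.measurable_of_measurable_coe _ fun s hs ↦ ?_
  have hdiag : Measurable fun y : E ↦ (y, y) := by fun_prop
  simp only [diagonalCoupling, Measure.add_apply, Measure.map_apply hdiag hs, Measure.smul_apply,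
    smul_eq_mul, ← Kernel.prod_apply]
  exact (m.measurable_coe (hdiag hs)).add
    ((a.measurable_coe .univ).inv.mul ((a ×ₖ b).measurable_coe hs))

theorem exists_kernel_isMaximalCoupling [MeasurableSpace.CountableOrCountablyGenerated A E]
    [MeasurableEq E] (κ η : Kernel A E) [IsFiniteKernel κ] [IsFiniteKernel η]
    (hmass : ∀ x, κ x univ = η x univ) :
    ∃ π : Kernel A (E × E), ∀ x, IsMaximalCoupling (π x) (κ x) (η x) := by
  obtain ⟨m, a, b, rfl, rfl, hab⟩ := exists_kernel_eq_add_mutuallySingular κ η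
  have : IsFiniteKernel m := isFiniteKernel_of_le (ν := m + a) fun x ↦ Measure.le_add_right le_rfl
  have : IsFiniteKernel a := isFiniteKernel_of_le (ν := m + a) fun x ↦ Measure.le_add_left le_rfl
  have : IsFiniteKernel b := isFiniteKernel_of_le (ν := m + b) fun x ↦ Measure.le_add_left le_rfl
  refine ⟨⟨fun x ↦ diagonalCoupling (m x) (a x) (b x), measurable_diagonalCoupling m a b⟩,
    fun x ↦ isMaximalCoupling_diagonalCoupling (m x) ?_ (hab x)⟩
  exact (ENNReal.add_right_inj (measure_ne_top (m x) univ)).1 (hmass x)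

end Kernel

section WeakTopology

variable {X : Type*} [TopologicalSpace X] [MeasurableSpace X]

lemma lowerSemicontinuous_toMeasure_apply_of_isOpen [OpensMeasurableSpace X]
    [HasOuterApproxClosed X] {G : Set X} (hG : IsOpen G) :
    LowerSemicontinuous fun μ : ProbabilityMeasure X ↦ μ.toMeasure G :=
  lowerSemicontinuous_iff_le_liminf.2 fun _ ↦
    ProbabilityMeasure.le_liminf_measure_open_of_tendsto tendsto_id hG

lemma continuous_of_lowerSemicontinuous_toMeasure_apply [OpensMeasurableSpace X]
    {Y : Type*} [TopologicalSpace Y] [FirstCountableTopology Y] {F : Y → ProbabilityMeasure X}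
    (hF : ∀ G, IsOpen G → LowerSemicontinuous fun y ↦ (F y).toMeasure G) : Continuous F :=
  continuous_iff_continuousAt.2 fun y ↦
    tendsto_of_forall_isOpen_le_liminf' fun G hG ↦ (hF G hG).le_liminf y

variable (X) in
lemma exists_countable_isOpen_inner_regular [SecondCountableTopology X] :
    ∃ C : Set (Set X), C.Countable ∧ (∀ U ∈ C, IsOpen U) ∧
      ∀ (μ : ProbabilityMeasure X) (G : Set X) (r : ℝ≥0∞), IsOpen G → r < μ.toMeasure G →
        ∃ U ∈ C, U ⊆ G ∧ r < μ.toMeasure U := by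
  have hB := isBasis_countableBasis X
  refine ⟨sUnion '' {T | T.Finite ∧ T ⊆ countableBasis X},
    (countable_ofPred_finite_subset (countable_countableBasis X)).image _, ?_, ?_⟩
  · rintro _ ⟨T, ⟨-, hT⟩, rfl⟩
    exact isOpen_sUnion fun U hU ↦ hB.isOpen (hT hU)
  · intro μ G r hG hr
    lift r to NNReal using hr.ne_top
    rw [← ProbabilityMeasure.ennreal_coeFn_eq_coeFn_toMeasure, ENNReal.coe_lt_coe] at hr
    obtain ⟨T, hTB, hrT, hTG⟩ := μ.exists_lt_measure_biUnion_of_isOpen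
      (fun u hu x hx ↦ (hB.mem_nhds_iff.1 (hu.mem_nhds hx)).imp
        fun s hs ↦ ⟨hs.1, (hB.isOpen hs.1).mem_nhds hs.2.1, hs.2.2⟩) hG hr
    refine ⟨⋃ t ∈ T, t, ⟨T, ⟨T.finite_toSet, hTB⟩, by simp [sUnion_eq_biUnion]⟩, hTG, ?_⟩
    rwa [← ProbabilityMeasure.ennreal_coeFn_eq_coeFn_toMeasure, ENNReal.coe_lt_coe]

variable (X) in
lemma exists_countable_subbasis_probabilityMeasure [OpensMeasurableSpace X]
    [SecondCountableTopology X] [HasOuterApproxClosed X] :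
    ∃ S : Set (Set (ProbabilityMeasure X)), S.Countable ∧ (∀ W ∈ S, MeasurableSet W) ∧
      ProbabilityMeasure.instTopologicalSpace = generateFrom S := by
  obtain ⟨C, hCcount, hCopen, hC⟩ := exists_countable_isOpen_inner_regular X
  obtain ⟨D, hDcount, hDdense⟩ := exists_countable_dense ℝ≥0∞
  let S := image2 (fun (U : Set X) q ↦ {μ : ProbabilityMeasure X | q < μ.toMeasure U}) C D
  have hScount : S.Countable := hCcount.image2 hDcount _
  refine ⟨S, hScount, ?_, le_antisymm (le_generateFrom ?_) ?_⟩
  · rintro _ ⟨U, hU, q, -, rfl⟩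
    exact measurableSet_lt measurable_const
      ((Measure.measurable_coe (hCopen U hU).measurableSet).comp measurable_subtype_coe)
  · rintro _ ⟨U, hU, q, -, rfl⟩
    exact (lowerSemicontinuous_toMeasure_apply_of_isOpen (hCopen U hU)).isOpen_preimage q
  · let t := generateFrom S
    have : @SecondCountableTopology _ t := @SecondCountableTopology.mk _ t ⟨S, hScount, rfl⟩
    refine continuous_id_iff_le.1 <| @continuous_of_lowerSemicontinuous_toMeasure_apply
      X _ _ _ _ t inferInstance _ fun G hG μ r hr ↦ ?_
    obtain ⟨U, hU, hUG, hrU⟩ := hC μ G r hG hr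
    obtain ⟨q, hq, hrq, hqU⟩ := hDdense.exists_between hrU
    have hopen : IsOpen[t] {ν : ProbabilityMeasure X | q < ν.toMeasure U} :=
      isOpen_generateFrom_of_mem (mem_image2_of_mem hU hq)
    have hmem : {ν : ProbabilityMeasure X | q < ν.toMeasure U} ∈ @nhds _ t μ :=
      @IsOpen.mem_nhds _ t _ _ hopen hqU
    filter_upwards [hmem] with ν hν
    exact hrq.trans (hν.trans_le (measure_mono hUG))

instance secondCountableTopology_probabilityMeasure [OpensMeasurableSpace X]
    [SecondCountableTopology X] [HasOuterApproxClosed X] :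
    SecondCountableTopology (ProbabilityMeasure X) := by
  obtain ⟨S, hS, -, heq⟩ := exists_countable_subbasis_probabilityMeasure X
  exact ⟨S, hS, heq⟩

lemma measurable_toMeasure_borel [BorelSpace X] [HasOuterApproxClosed X] :
    Measurable[borel (ProbabilityMeasure X)] (fun μ : ProbabilityMeasure X ↦ μ.toMeasure) := by
  borelize (ProbabilityMeasure X)
  exact Measurable.measure_of_isPiSystem_of_isProbabilityMeasure
    (BorelSpace.measurable_eq (α := X)) isPiSystem_isOpen
    fun G hG ↦ (lowerSemicontinuous_toMeasure_apply_of_isOpen hG).measurable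

instance borelSpace_probabilityMeasure [BorelSpace X] [SecondCountableTopology X]
    [HasOuterApproxClosed X] : BorelSpace (ProbabilityMeasure X) where
  measurable_eq := by
    refine le_antisymm (measurable_iff_comap_le.1 measurable_toMeasure_borel) ?_
    obtain ⟨S, -, hSmeas, heq⟩ := exists_countable_subbasis_probabilityMeasure X
    rw [borel_eq_generateFrom_of_subbasis heq]
    exact MeasurableSpace.generateFrom_le hSmeas

end WeakTopology

theorem exists_measurable_maximal_coupling_general
    {E : Type*} [TopologicalSpace E] [MetrizableSpace E] [SecondCountableTopology E]
    [MeasurableSpace E] [BorelSpace E] :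
    ∃ Φ : ProbabilityMeasure E × ProbabilityMeasure E → ProbabilityMeasure (E × E),
      @Measurable _ _ (borel (ProbabilityMeasure E × ProbabilityMeasure E))
        (borel (ProbabilityMeasure (E × E))) Φ ∧
      ∀ μ ν : ProbabilityMeasure E,
        (Φ (μ, ν)).toMeasure.map Prod.fst = μ.toMeasure ∧
        (Φ (μ, ν)).toMeasure.map Prod.snd = ν.toMeasure ∧
        ((Φ (μ, ν)).toMeasure {p : E × E | p.1 ≠ p.2}).toReal
          = tvDist μ.toMeasure ν.toMeasure := by
  let κ : Kernel (ProbabilityMeasure E × ProbabilityMeasure E) E :=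
    ⟨fun x ↦ x.1, measurable_subtype_coe.comp measurable_fst⟩
  let η : Kernel (ProbabilityMeasure E × ProbabilityMeasure E) E :=
    ⟨fun x ↦ x.2, measurable_subtype_coe.comp measurable_snd⟩
  have : IsMarkovKernel κ := ⟨fun x ↦ x.1.2⟩
  have : IsMarkovKernel η := ⟨fun x ↦ x.2.2⟩
  obtain ⟨π, hπ⟩ := exists_kernel_isMaximalCoupling κ η fun x ↦ by simp only [measure_univ]
  have hprob (x) : IsProbabilityMeasure (π x) := by
    have : IsProbabilityMeasure ((π x).map Prod.fst) := (hπ x).map_fst ▸ x.1.2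
    exact Measure.isProbabilityMeasure_of_map Prod.fst
  refine ⟨fun x ↦ ⟨π x, hprob x⟩, ?_,
    fun μ ν ↦ ⟨(hπ (μ, ν)).map_fst, (hπ (μ, ν)).map_snd, (hπ (μ, ν)).toReal_compl_diagonal⟩⟩
  rw [← BorelSpace.measurable_eq, ← BorelSpace.measurable_eq]
  exact π.measurable.subtype_mk

/-- on a Polish space, a maximal coupling can be chosen measurably in the
pair of probability measures, where `𝒫(E)` carries the topology of weak convergence and
the associated Borel σ-algebra. -/
theorem exists_measurable_maximal_coupling
    {E : Type*} [TopologicalSpace E] [PolishSpace E] [MeasurableSpace E] [BorelSpace E] :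
    ∃ Φ : ProbabilityMeasure E × ProbabilityMeasure E → ProbabilityMeasure (E × E),
      @Measurable _ _ (borel (ProbabilityMeasure E × ProbabilityMeasure E))
        (borel (ProbabilityMeasure (E × E))) Φ ∧
      ∀ μ ν : ProbabilityMeasure E,
        (Φ (μ, ν)).toMeasure.map Prod.fst = μ.toMeasure ∧
        (Φ (μ, ν)).toMeasure.map Prod.snd = ν.toMeasure ∧
        ((Φ (μ, ν)).toMeasure {p : E × E | p.1 ≠ p.2}).toReal
          = tvDist μ.toMeasure ν.toMeasure :=
  exists_measurable_maximal_coupling_general
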